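/- arXiv:1410.3166 — 5 statements merged into one kernel-verified Lean document; each statement's English description precedes it below -/
import Mathlib

section
/- For a finite-dimensional Λ-module M: socseq(M) = reverse(rad(M)) (as tuples in ℕ^{L+1}) if and only if soc_l M = J^{L-l} M as submodules of M for every 0 ≤ l ≤ L. -/
noncomputable section

/-- The relation on the free algebra killing all products of `L+1` generators. -/
def TruncRel (K : Type*) [Field K] (r L : ℕ) :
    FreeAlgebra K (Fin r) → FreeAlgebra K (Fin r) → Prop := fun a b =>
  (∃ f : Fin (L + 1) → Fin r, a = (List.ofFn fun j => FreeAlgebra.ι K (f j)).prod) ∧ b = 0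

/-- The local truncated path algebra with `r` loops and Loewy length `L+1`:
the quotient of `K⟨X_1,…,X_r⟩` by the two-sided ideal generated by all products
of `L+1` generators. -/
def TruncAlg (K : Type*) [Field K] (r L : ℕ) : Type _ := RingQuot (TruncRel K r L)

instance (K : Type*) [Field K] (r L : ℕ) : Ring (TruncAlg K r L) :=
  inferInstanceAs (Ring (RingQuot _))

instance (K : Type*) [Field K] (r L : ℕ) : Algebra K (TruncAlg K r L) :=
  inferInstanceAs (Algebra K (RingQuot _))

/-- The images of the generators `X i` in the truncated algebra. -/
def gen (K : Type*) [Field K] (r L : ℕ) (i : Fin r) : TruncAlg K r L :=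
  RingQuot.mkAlgHom K (TruncRel K r L) (FreeAlgebra.ι K i)

/-- The two-sided ideal `J` of `Λ` generated by the images of `X_1,…,X_r`,
realized as a `K`-submodule of `Λ`. -/
def Jrad (K : Type*) [Field K] (r L : ℕ) : Submodule K (TruncAlg K r L) :=
  ⊤ * Submodule.span K (Set.range (gen K r L)) * ⊤

/-- `J^l M`, the submodule of `M` given by the action of `J^l`. -/
def jpow (K : Type*) [Field K] (r L : ℕ) (M : Type*) [AddCommGroup M] [Module K M]
    [Module (TruncAlg K r L) M] [IsScalarTower K (TruncAlg K r L) M] (l : ℕ) :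
    Submodule (TruncAlg K r L) M :=
  Submodule.span (TruncAlg K r L)
    {x : M | ∃ a ∈ (Jrad K r L ^ l : Submodule K (TruncAlg K r L)), ∃ m : M, x = a • m}

/-- The socle of a module: the supremum of all simple submodules. -/
def socle (R N : Type*) [Ring R] [AddCommGroup N] [Module R N] : Submodule R N :=
  sSup {p : Submodule R N | IsSimpleModule R ↥p}

/-- The socle series: `socSeries R M l` is `soc_{l-1} M`, so `socSeries R M 0 = soc_{-1} M = ⊥`
and `socSeries R M (l+1) = soc_l M` is the preimage in `M` of `soc (M / soc_{l-1} M)`. -/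
def socSeries (R M : Type*) [Ring R] [AddCommGroup M] [Module R M] : ℕ → Submodule R M
  | 0 => ⊥
  | l + 1 => Submodule.comap (socSeries R M l).mkQ (socle R (M ⧸ socSeries R M l))

/-- Dimension of the subquotient `q / (p ⊓ q)`; for `p ≤ q` this is `dim (q/p)`. -/
def quotDim (K M : Type*) [Field K] [AddCommGroup M] [Module K M]
    (p q : Submodule K M) : ℕ :=
  Module.finrank K (↥q ⧸ Submodule.comap q.subtype p)

/-- The radical layering `rad(M) = (dim_K J^l M / J^{l+1} M)_{l=0,…,L}`. -/
def radLayering (K : Type*) [Field K] (r L : ℕ) (M : Type*) [AddCommGroup M] [Module K M]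
    [Module (TruncAlg K r L) M] [IsScalarTower K (TruncAlg K r L) M] : Fin (L + 1) → ℕ :=
  fun l => quotDim K M ((jpow K r L M ((l : ℕ) + 1)).restrictScalars K)
    ((jpow K r L M (l : ℕ)).restrictScalars K)

/-- The socle layering `socseq(M) = (dim_K soc_l M / soc_{l-1} M)_{l=0,…,L}`. -/
def socLayering (K : Type*) [Field K] (r L : ℕ) (M : Type*) [AddCommGroup M] [Module K M]
    [Module (TruncAlg K r L) M] [IsScalarTower K (TruncAlg K r L) M] : Fin (L + 1) → ℕ :=
  fun l => quotDim K M ((socSeries (TruncAlg K r L) M (l : ℕ)).restrictScalars K)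
    ((socSeries (TruncAlg K r L) M ((l : ℕ) + 1)).restrictScalars K)

/-- The dominance order on `ℕ^{L+1}`: `a ≼ b` iff all partial sums satisfy `≤`. -/
def DomLE (L : ℕ) (a b : Fin (L + 1) → ℕ) : Prop :=
  ∀ l : Fin (L + 1), ∑ j ∈ Finset.Iic l, a j ≤ ∑ j ∈ Finset.Iic l, b j

/-- `reverse (a_0, …, a_L) = (a_L, …, a_0)`. -/
def revTuple (L : ℕ) (a : Fin (L + 1) → ℕ) : Fin (L + 1) → ℕ := fun l => a l.rev

section Helpers

variable (K : Type) [Field K] (r L : ℕ)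

def mkT : FreeAlgebra K (Fin r) →ₐ[K] TruncAlg K r L :=
  RingQuot.mkAlgHom K (TruncRel K r L)

theorem gen_eq (i : Fin r) : gen K r L i = mkT K r L (FreeAlgebra.ι K i) := rfl

theorem mkT_surj : Function.Surjective (mkT K r L) :=
  RingQuot.mkAlgHom_surjective K (TruncRel K r L)

theorem mkT_rel (f : Fin (L + 1) → Fin r) :
    mkT K r L (List.ofFn fun j => FreeAlgebra.ι K (f j)).prod = 0 := by
  have := RingQuot.mkAlgHom_rel K (s := TruncRel K r L) (y := 0) ⟨⟨f, rfl⟩, rfl⟩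
  exact this.trans (map_zero (mkT K r L))

def Wfil (n : ℕ) : Submodule K (TruncAlg K r L) :=
  Submodule.span K {x | ∃ w : List (Fin r), n ≤ w.length ∧ x = (w.map (gen K r L)).prod}

theorem Wfil_mul (m n : ℕ) : Wfil K r L m * Wfil K r L n ≤ Wfil K r L (m + n) := by
  unfold Wfil
  rw [Submodule.span_mul_span]
  apply Submodule.span_mono
  rintro _ ⟨_, ⟨u, hu, rfl⟩, _, ⟨v, hv, rfl⟩, rfl⟩
  exact ⟨u ++ v, by simp; omega, by simp⟩

theorem Wfil_zero : Wfil K r L 0 = ⊤ := by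
  rw [eq_top_iff]
  rintro x -
  obtain ⟨y, rfl⟩ : ∃ y, mkT K r L y = x := mkT_surj K r L x
  have h1 : (1 : TruncAlg K r L) ∈ Wfil K r L 0 :=
    Submodule.subset_span ⟨[], by simp, by simp⟩
  induction y using FreeAlgebra.induction with
  | grade0 c =>
    rw [AlgHom.commutes]
    have := (Wfil K r L 0).smul_mem c h1
    rwa [← Algebra.algebraMap_eq_smul_one] at this
  | grade1 i => exact Submodule.subset_span ⟨[i], by simp, by simp [gen_eq]⟩
  | mul a b ha hb =>
    rw [map_mul]
    exact Wfil_mul K r L 0 0 (Submodule.mul_mem_mul ha hb)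
  | add a b ha hb =>
    rw [map_add]
    exact Submodule.add_mem _ ha hb

theorem Jrad_le : Jrad K r L ≤ Wfil K r L 1 := by
  unfold Jrad
  rw [← Wfil_zero K r L]
  have h : Submodule.span K (Set.range (gen K r L)) ≤ Wfil K r L 1 := by
    rw [Submodule.span_le]
    rintro _ ⟨i, rfl⟩
    exact Submodule.subset_span ⟨[i], by simp, by simp⟩
  exact (mul_le_mul' ((mul_le_mul' le_rfl h).trans (Wfil_mul K r L 0 1)) le_rfl).trans
    (Wfil_mul K r L 1 0)

theorem Jrad_pow_le (n : ℕ) : Jrad K r L ^ n ≤ Wfil K r L n := by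
  induction n with
  | zero => rw [Wfil_zero]; exact le_top
  | succ n ih =>
    rw [pow_succ]
    exact (mul_le_mul' ih (Jrad_le K r L)).trans (Wfil_mul K r L n 1)

theorem Wfil_top : Wfil K r L (L + 1) = ⊥ := by
  rw [eq_bot_iff]
  unfold Wfil
  rw [Submodule.span_le]
  rintro _ ⟨w, hw, rfl⟩
  have h0 : ((w.take (L+1)).map (gen K r L)).prod = 0 := by
    have hl : (w.take (L+1)).length = L + 1 := by simp; omega
    have := mkT_rel K r L (fun j => (w.take (L+1)).get (j.cast hl.symm))
    rw [map_list_prod, List.map_ofFn] at this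
    refine Eq.trans ?_ this
    congr 1
    apply List.ext_getElem
    · rw [List.length_map, List.length_ofFn, hl]
    · intro n h1 h2
      rw [List.getElem_map, List.getElem_ofFn]
      rfl
  rw [← List.take_append_drop (L+1) w, List.map_append, List.prod_append, h0, zero_mul]
  simp

theorem exists_decomp (a : TruncAlg K r L) :
    ∃ c : K, ∃ j ∈ Jrad K r L, a = algebraMap K _ c + j := by
  have ha : a ∈ Wfil K r L 0 := by rw [Wfil_zero]; trivial
  unfold Wfil at ha
  induction ha using Submodule.span_induction with
  | mem x hx =>
    obtain ⟨w, -, rfl⟩ := hx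
    cases w with
    | nil => exact ⟨1, 0, Submodule.zero_mem _, by simp⟩
    | cons i w =>
      refine ⟨0, _, ?_, by rw [map_zero, zero_add]⟩
      rw [List.map_cons, List.prod_cons]
      refine Submodule.mul_mem_mul ?_ trivial
      rw [← one_mul (gen K r L i)]
      exact Submodule.mul_mem_mul trivial (Submodule.subset_span ⟨i, rfl⟩)
  | zero => exact ⟨0, 0, Submodule.zero_mem _, by simp⟩
  | add x y _ _ hx hy =>
    obtain ⟨c, j, hj, rfl⟩ := hx
    obtain ⟨d, k, hk, rfl⟩ := hy
    exact ⟨c + d, j + k, Submodule.add_mem _ hj hk, by rw [map_add]; abel⟩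
  | smul t x _ hx =>
    obtain ⟨c, j, hj, rfl⟩ := hx
    exact ⟨t * c, t • j, Submodule.smul_mem _ _ hj, by
      rw [smul_add, map_mul, Algebra.smul_def t (algebraMap K (TruncAlg K r L) c)]⟩

theorem mem_socle_of_kill {N : Type} [AddCommGroup N] [Module (TruncAlg K r L) N] (x : N)
    (hx : ∀ j ∈ Jrad K r L, j • x = 0) : x ∈ socle (TruncAlg K r L) N := by
  by_cases h0 : x = 0
  · rw [h0]; exact Submodule.zero_mem _
  have hs : IsSimpleModule (TruncAlg K r L) (Submodule.span (TruncAlg K r L) {x}) := by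
    rw [isSimpleModule_iff_isAtom]
    refine ⟨by simpa using h0, fun p hp => ?_⟩
    by_contra hb
    obtain ⟨y, hy, hy0⟩ := Submodule.exists_mem_ne_zero_of_ne_bot hb
    apply hp.not_ge
    rw [Submodule.span_singleton_le_iff_mem]
    obtain ⟨a, rfl⟩ := Submodule.mem_span_singleton.1 (hp.le hy)
    obtain ⟨c, j, hj, rfl⟩ := exists_decomp K r L a
    rw [add_smul, hx j hj, add_zero] at hy hy0
    have hc : c ≠ 0 := by rintro rfl; simp at hy0
    have := p.smul_mem (algebraMap K _ c⁻¹) hy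
    rwa [smul_smul, ← map_mul, inv_mul_cancel₀ hc, map_one, one_smul] at this
  exact (le_sSup (a := Submodule.span (TruncAlg K r L) {x}) hs)
    (Submodule.mem_span_singleton_self x)

variable (M : Type) [AddCommGroup M] [Module K M] [Module (TruncAlg K r L) M]
    [IsScalarTower K (TruncAlg K r L) M]

theorem jpow_top : jpow K r L M (L + 1) = ⊥ := by
  rw [eq_bot_iff]
  unfold jpow
  rw [Submodule.span_le]
  rintro _ ⟨a, ha, m, rfl⟩
  have := Jrad_pow_le K r L (L+1) ha
  rw [Wfil_top, Submodule.mem_bot] at this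
  simp [this]

theorem jpow_succ_le (n : ℕ) : jpow K r L M (n + 1) ≤ jpow K r L M n := by
  rw [jpow, Submodule.span_le]
  rintro _ ⟨a, ha, m, rfl⟩
  rw [pow_succ] at ha
  induction ha using Submodule.mul_induction_on' with
  | mem_mul_mem b hb j hj =>
    rw [mul_smul]
    exact Submodule.subset_span ⟨b, hb, _, rfl⟩
  | add x _ y _ hx hy =>
    rw [add_smul]
    exact Submodule.add_mem _ hx hy

theorem jpow_le_soc (k : ℕ) (hk : k ≤ L + 1) :
    jpow K r L M (L + 1 - k) ≤ socSeries (TruncAlg K r L) M k := by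
  induction k with
  | zero => rw [Nat.sub_zero, jpow_top]; exact bot_le
  | succ k ih =>
    have ih := ih (by omega)
    rw [jpow, Submodule.span_le]
    rintro _ ⟨a, ha, m, rfl⟩
    change (socSeries (TruncAlg K r L) M k).mkQ (a • m) ∈ socle _ _
    apply mem_socle_of_kill
    intro j hj
    rw [← map_smul, Submodule.mkQ_apply, Submodule.Quotient.mk_eq_zero]
    apply ih
    refine Submodule.subset_span ⟨j * a, ?_, m, by rw [mul_smul]⟩
    have : L + 1 - k = (L + 1 - (k + 1)) + 1 := by omega
    rw [this, pow_succ']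
    exact Submodule.mul_mem_mul hj ha

theorem soc_le_succ (k : ℕ) :
    socSeries (TruncAlg K r L) M k ≤ socSeries (TruncAlg K r L) M (k + 1) := by
  intro x hx
  change (socSeries (TruncAlg K r L) M k).mkQ x ∈ socle _ _
  rw [Submodule.mkQ_apply, (Submodule.Quotient.mk_eq_zero _).2 hx]
  exact Submodule.zero_mem _

theorem quotDim_add [FiniteDimensional K M] (p q : Submodule K M) (h : p ≤ q) :
    quotDim K M p q + Module.finrank K p = Module.finrank K q := by
  have := Submodule.finrank_quotient_add_finrank (Submodule.comap q.subtype p)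
  rwa [(Submodule.comapSubtypeEquivOfLe h).finrank_eq] at this

end Helpers

/-- `socseq M = reverse (rad M)` iff `soc_l M = J^{L-l} M` as submodules of `M`
for every `0 ≤ l ≤ L`. -/
theorem stmt8 (K : Type) [Field K] [IsAlgClosed K] (r L : ℕ) (hr : 0 < r) (hL : 0 < L)
    (M : Type) [AddCommGroup M] [Module K M] [Module (TruncAlg K r L) M]
    [IsScalarTower K (TruncAlg K r L) M] [FiniteDimensional K M] :
    socLayering K r L M = revTuple L (radLayering K r L M) ↔
      ∀ l : Fin (L + 1),
        socSeries (TruncAlg K r L) M ((l : ℕ) + 1) = jpow K r L M (L - (l : ℕ)) := by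
  constructor
  · intro h
    have key : ∀ k, k ≤ L + 1 →
        Module.finrank K ((socSeries (TruncAlg K r L) M k).restrictScalars K) =
        Module.finrank K ((jpow K r L M (L + 1 - k)).restrictScalars K) := by
      intro k hk
      induction k with
      | zero =>
        rw [Nat.sub_zero, jpow_top]; rfl
      | succ k ih =>
        have ih := ih (by omega)
        have e := congrFun h ⟨k, by omega⟩
        simp only [socLayering, revTuple, radLayering, Fin.val_rev] at e
        have h1 := quotDim_add K M _ _ (show (socSeries (TruncAlg K r L) M k).restrictScalars K ≤
          (socSeries (TruncAlg K r L) M (k+1)).restrictScalars K from soc_le_succ K r L M k)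
        have h2 := quotDim_add K M _ _
          (show (jpow K r L M (L + 1 - (k + 1) + 1)).restrictScalars K ≤
          (jpow K r L M (L + 1 - (k + 1))).restrictScalars K from jpow_succ_le K r L M _)
        have e2 : L + 1 - k = L + 1 - (k + 1) + 1 := by omega
        rw [e2] at ih
        omega
    intro l
    have hl := l.2
    have hle := jpow_le_soc K r L M (l + 1) (by omega)
    have hk := key (l + 1) (by omega)
    have e : L + 1 - ((l : ℕ) + 1) = L - l := by omega
    rw [e] at hle hk
    have := Submodule.eq_of_le_of_finrank_eq
      (show (jpow K r L M (L - l)).restrictScalars K ≤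
        (socSeries (TruncAlg K r L) M (l + 1)).restrictScalars K from hle) hk.symm
    exact (Submodule.restrictScalars_injective K _ _ this).symm
  · intro h
    have key : ∀ k, k ≤ L + 1 →
        socSeries (TruncAlg K r L) M k = jpow K r L M (L + 1 - k) := by
      intro k hk
      cases k with
      | zero => rw [Nat.sub_zero, jpow_top]; rfl
      | succ k =>
        have := h ⟨k, by omega⟩
        simpa using this
    funext l
    have hl := l.2
    simp only [socLayering, revTuple, radLayering, Fin.val_rev]
    rw [key l (by omega), key (l + 1) (by omega)]
    have e2 : L + 1 - (l : ℕ) = L + 1 - (l + 1) + 1 := by omega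
    rw [e2]
end
end

section
/- Let f : X → A be an upper semicontinuous map from a topological space X to a partially ordered set A, and assume the image f(X) is well partially ordered. Then for every a ∈ A, the preimages f^{-1}({b ∈ A | b ≤ a}) and f^{-1}({b ∈ A | b < a}) are open subsets of X. -/
/-- A map `f : X → A` to a poset is upper semicontinuous if the preimage of every
up-set `[a, ∞)` is closed. -/
def UpperSemicontinuousToPoset {X A : Type*} [TopologicalSpace X] [PartialOrder A]
    (f : X → A) : Prop :=
  ∀ a : A, IsClosed (f ⁻¹' {b | a ≤ b})

/-- A subset `S` of a poset is well partially ordered if it contains no infinite strictly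
descending chain and every nonempty subset of `S` has only finitely many minimal elements. -/
def WellPartiallyOrdered {A : Type*} [PartialOrder A] (S : Set A) : Prop :=
  (¬ ∃ g : ℕ → A, (∀ n, g n ∈ S) ∧ ∀ n, g (n + 1) < g n) ∧
  (∀ T : Set A, T ⊆ S → T.Nonempty → {a ∈ T | ∀ b ∈ T, b ≤ a → b = a}.Finite)

theorem stmt11_aux {X A : Type*} [TopologicalSpace X] [PartialOrder A] (f : X → A)
    (hf : UpperSemicontinuousToPoset f) (hwpo : WellPartiallyOrdered (Set.range f))
    (D : Set A) (hD : IsLowerSet D) : IsOpen (f ⁻¹' D) := by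
  obtain ⟨h1, h2⟩ := hwpo
  rw [← isClosed_compl_iff]
  by_cases hne : (Dᶜ ∩ Set.range f).Nonempty
  · have hfin := h2 _ Set.inter_subset_right hne
    have hc := hfin.isClosed_biUnion (f := fun m => f ⁻¹' {b | m ≤ b}) (fun m _ => hf m)
    convert hc using 1
    ext x
    simp only [Set.mem_iUnion, Set.mem_preimage, Set.mem_compl_iff, Set.mem_setOf_eq, exists_prop]
    constructor
    · intro hx
      by_contra hno
      apply h1
      let P := {s : A // s ∈ Dᶜ ∩ Set.range f ∧ s ≤ f x}
      have step : ∀ s : P, ∃ s' : P, s'.1 < s.1 := by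
        rintro ⟨s, hs, hsx⟩
        by_contra hmin
        refine hno ⟨s, ⟨hs, fun b hb hbs => ?_⟩, hsx⟩
        by_contra hne'
        exact hmin ⟨⟨b, hb, hbs.trans hsx⟩, lt_of_le_of_ne hbs hne'⟩
      choose nxt hnxt using step
      let g : ℕ → P := fun n => Nat.rec ⟨f x, ⟨hx, x, rfl⟩, le_rfl⟩ (fun _ p => nxt p) n
      exact ⟨fun n => (g n).1, fun n => (g n).2.1.2, fun n => hnxt (g n)⟩
    · rintro ⟨m, ⟨⟨hm, _⟩, _⟩, hmx⟩ hx
      exact hm (hD hmx hx)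
  · convert isClosed_empty (X := X)
    ext x
    simp only [Set.mem_compl_iff, Set.mem_preimage, Set.mem_empty_iff_false, iff_false]
    exact fun hx => hne ⟨f x, hx, x, rfl⟩

/-- If `f : X → A` is upper semicontinuous with well partially ordered image,
then the preimages of `(-∞, a]` and `(-∞, a)` are open for every `a ∈ A`. -/
theorem stmt11 {X A : Type*} [TopologicalSpace X] [PartialOrder A] (f : X → A)
    (hf : UpperSemicontinuousToPoset f) (hwpo : WellPartiallyOrdered (Set.range f)) :
    ∀ a : A, IsOpen (f ⁻¹' {b | b ≤ a}) ∧ IsOpen (f ⁻¹' {b | b < a}) := by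
  exact fun a => ⟨stmt11_aux f hf hwpo _ (isLowerSet_Iic a),
    stmt11_aux f hf hwpo _ (isLowerSet_Iio a)⟩
end

section
/- Let f : X → A be an upper semicontinuous map from a topological space X to a partially ordered set A, and assume the image f(X) is well partially ordered. Then for every irreducible (in particular nonempty) subset U ⊆ X, the set f(U) has exactly one minimal element c; moreover c ≤ f(x) for all x ∈ U, and the fiber {x ∈ U | f(x) = c} is a nonempty subset of U that is open and dense in U with its subspace topology. -/
theorem wpo_basis {A : Type*} [PartialOrder A] {S : Set A} (h : WellPartiallyOrdered S)
    (T : Set A) (hT : T ⊆ S) :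
    ∃ M : Set A, M.Finite ∧ M ⊆ T ∧ ∀ t ∈ T, ∃ m ∈ M, m ≤ t := by
  rcases T.eq_empty_or_nonempty with rfl | hne
  · exact ⟨∅, Set.finite_empty, subset_rfl, by simp⟩
  refine ⟨_, h.2 T hT hne, fun x hx => hx.1, ?_⟩
  have hwf : WellFounded (fun a b : S => (a : A) < b) := by
    rw [wellFounded_iff_isEmpty_descending_chain]
    exact ⟨fun g => h.1 ⟨fun n => g.1 n, fun n => (g.1 n).2, fun n => g.2 n⟩⟩
  intro t ht
  obtain ⟨m, ⟨hm, hmt⟩, hmin⟩ := hwf.has_min {s : S | (s : A) ∈ T ∧ (s : A) ≤ t}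
    ⟨⟨t, hT ht⟩, ht, le_rfl⟩
  refine ⟨m, ⟨hm, fun b hb hbm => ?_⟩, hmt⟩
  by_contra hne
  exact hmin ⟨b, hT hb⟩ ⟨hb, hbm.trans hmt⟩ (lt_of_le_of_ne hbm hne)

/-- If `f : X → A` is upper semicontinuous with well partially ordered image,
then on every irreducible subset `U ⊆ X` the set `f(U)` has exactly one minimal element `c`;
moreover `c ≤ f x` for all `x ∈ U`, and the fiber `{x ∈ U | f x = c}` is nonempty, open and
dense in `U` with its subspace topology. -/
theorem stmt12 {X A : Type*} [TopologicalSpace X] [PartialOrder A] (f : X → A)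
    (hf : UpperSemicontinuousToPoset f) (hwpo : WellPartiallyOrdered (Set.range f))
    (U : Set X) (hU : IsIrreducible U) :
    ∃ c ∈ f '' U,
      (∀ b ∈ f '' U, b ≤ c → b = c) ∧
      (∀ b ∈ f '' U, (∀ b' ∈ f '' U, b' ≤ b → b' = b) → b = c) ∧
      (∀ x ∈ U, c ≤ f x) ∧
      ({y : U | f ↑y = c}.Nonempty ∧ IsOpen {y : U | f ↑y = c} ∧ Dense {y : U | f ↑y = c}) := by
  have hsub : f '' U ⊆ Set.range f := Set.image_subset_range f U
  obtain ⟨M, hMf, hMU, hM⟩ := wpo_basis hwpo (f '' U) hsub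
  have hc : ∃ c ∈ M, U ⊆ f ⁻¹' {b | c ≤ b} := by
    have := isIrreducible_iff_sUnion_isClosed.1 hU
      (hMf.image (fun a => f ⁻¹' {b | a ≤ b})).toFinset
      (by
        intro z hz
        simp only [Set.Finite.mem_toFinset, Set.mem_image] at hz
        obtain ⟨a, -, rfl⟩ := hz
        exact hf a)
      (by
        intro x hx
        obtain ⟨m, hm, hmx⟩ := hM (f x) ⟨x, hx, rfl⟩
        simp only [Set.Finite.coe_toFinset]
        exact ⟨_, ⟨m, hm, rfl⟩, hmx⟩)
    obtain ⟨z, hz, hUz⟩ := this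
    simp only [Set.Finite.mem_toFinset, Set.mem_image] at hz
    obtain ⟨a, ha, rfl⟩ := hz
    exact ⟨a, ha, hUz⟩
  obtain ⟨c, hcM, hcU⟩ := hc
  have hcT := hMU hcM
  have hle : ∀ x ∈ U, c ≤ f x := fun x hx => hcU hx
  have hne : {y : U | f ↑y = c}.Nonempty := by
    obtain ⟨x, hx, hxc⟩ := hcT
    exact ⟨⟨x, hx⟩, hxc⟩
  have hopen : IsOpen {y : U | f ↑y = c} := by
    obtain ⟨N, hNf, hNU, hN⟩ := wpo_basis hwpo (f '' U \ {c}) (Set.diff_subset.trans hsub)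
    have hcl : IsClosed (⋃ d ∈ N, (fun y : U => (y : X)) ⁻¹' (f ⁻¹' {b | d ≤ b})) :=
      hNf.isClosed_biUnion fun d _ => (hf d).preimage continuous_subtype_val
    convert hcl.isOpen_compl using 1
    ext y
    simp only [Set.mem_setOf_eq, Set.mem_compl_iff, Set.mem_iUnion, Set.mem_preimage]
    constructor
    · rintro hy ⟨d, hd, hdy⟩
      obtain ⟨⟨x, hx, rfl⟩, hdc⟩ := hNU hd
      exact hdc (le_antisymm (hy ▸ hdy) (hle x hx))
    · intro hy
      by_contra hyc
      obtain ⟨d, hd, hdy⟩ := hN (f y) ⟨⟨y, y.2, rfl⟩, hyc⟩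
      exact hy ⟨d, hd, hdy⟩
  refine ⟨c, hcT, ?_, ?_, hle, hne, hopen, ?_⟩
  · rintro _ ⟨x, hx, rfl⟩ h
    exact le_antisymm h (hle x hx)
  · rintro _ ⟨x, hx, rfl⟩ h
    exact (h c hcT (hle x hx)).symm
  · haveI : PreirreducibleSpace U := Subtype.preirreducibleSpace hU.2
    exact hopen.dense hne
end

section
/- Let X be a noetherian topological space, A a partially ordered set, and f : X → A an upper semicontinuous map whose image f(X) is well partially ordered. Then for every minimal element a of f(X), the closure of f^{-1}(a) in X is a nonempty finite union of irreducible components of X; that is, there is a nonempty finite collection of irreducible components of X whose union equals the closure of f^{-1}(a). -/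
/-- If `X` is a noetherian topological space and `f : X → A` an upper
semicontinuous map with well partially ordered image, then for every minimal element `a`
of `f(X)` the closure of `f ⁻¹(a)` is a nonempty finite union of irreducible components
of `X`. -/
theorem stmt13 {X A : Type*} [TopologicalSpace X] [TopologicalSpace.NoetherianSpace X]
    [PartialOrder A] (f : X → A)
    (hf : UpperSemicontinuousToPoset f) (hwpo : WellPartiallyOrdered (Set.range f))
    (a : A) (ha : a ∈ Set.range f) (hmin : ∀ b ∈ Set.range f, b ≤ a → b = a) :
    ∃ S : Set (Set X), S.Finite ∧ S.Nonempty ∧ (∀ C ∈ S, C ∈ irreducibleComponents X) ∧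
      ⋃₀ S = closure (f ⁻¹' {a}) := by
  have hopen : IsOpen (f ⁻¹' {a}) := by
    set T : Set A := Set.range f \ {a} with hT
    have hfin : {m ∈ T | ∀ b ∈ T, b ≤ m → b = m}.Finite := by
      rcases T.eq_empty_or_nonempty with h | h
      · rw [h]; exact Set.Finite.subset Set.finite_empty (fun x hx => hx.1)
      · exact hwpo.2 T Set.sdiff_subset h
    have hwf : WellFounded (fun x y : Set.range f => x.1 < y.1) := by
      rw [wellFounded_iff_isEmpty_descending_chain]
      refine ⟨fun g => hwpo.1 ⟨fun n => (g.1 n).1, fun n => (g.1 n).2, g.2⟩⟩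
    have hle : ∀ t ∈ T, ∃ m ∈ {m ∈ T | ∀ b ∈ T, b ≤ m → b = m}, m ≤ t := by
      intro t ht
      obtain ⟨m, hm, hm'⟩ := hwf.has_min {x | x.1 ∈ T ∧ x.1 ≤ t} ⟨⟨t, ht.1⟩, ht, le_rfl⟩
      refine ⟨m.1, ⟨hm.1, fun b hb hbm => ?_⟩, hm.2⟩
      by_contra hne
      exact hm' ⟨b, hb.1⟩ ⟨hb, hbm.trans hm.2⟩ (lt_of_le_of_ne hbm hne)
    have hc : (f ⁻¹' {a})ᶜ =
        ⋃ m ∈ {m ∈ T | ∀ b ∈ T, b ≤ m → b = m}, f ⁻¹' {b | m ≤ b} := by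
      ext x
      rw [Set.mem_iUnion₂]
      constructor
      · intro hx
        obtain ⟨m, hm, hmx⟩ := hle (f x) ⟨⟨x, rfl⟩, hx⟩
        exact ⟨m, hm, hmx⟩
      · rintro ⟨m, hm, hmx⟩ hx
        have hx' : f x = a := hx
        have hmx' : m ≤ f x := hmx
        exact hm.1.2 (hmin m hm.1.1 (hx' ▸ hmx'))
    rw [← isClosed_compl_iff, hc]
    exact hfin.isClosed_biUnion (fun m _ => hf m)
  have hSfin : {C ∈ irreducibleComponents X | (C ∩ f ⁻¹' {a}).Nonempty}.Finite :=
    TopologicalSpace.NoetherianSpace.finite_irreducibleComponents.subset (fun _ h => h.1)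
  have hmem : ∀ x ∈ f ⁻¹' {a}, irreducibleComponent x ∈
      {C ∈ irreducibleComponents X | (C ∩ f ⁻¹' {a}).Nonempty} := fun x hx =>
    ⟨irreducibleComponent_mem_irreducibleComponents x, x, mem_irreducibleComponent, hx⟩
  refine ⟨_, hSfin, ?_, fun C hC => hC.1, ?_⟩
  · obtain ⟨x, hx⟩ := ha
    exact ⟨_, hmem x hx⟩
  · apply Set.Subset.antisymm
    · refine Set.sUnion_subset fun C hC => ?_
      have hirr : IsIrreducible C := hC.1.1
      exact (subset_closure_inter_of_isPreirreducible_of_isOpen hirr.2 hopen hC.2).trans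
        (closure_mono Set.inter_subset_right)
    · refine closure_minimal (fun x hx => ⟨_, hmem x hx, mem_irreducibleComponent⟩) ?_
      rw [Set.sUnion_eq_biUnion]
      exact hSfin.isClosed_biUnion fun C hC => isClosed_of_mem_irreducibleComponents C hC.1
end

section
/- Let Λ' be the local truncated path algebra with r loops and Loewy length 2, i.e., the quotient of the free algebra K⟨X_1,…,X_r⟩ by the two-sided ideal generated by all products X_i X_j of two generators, and let J' be its (square-zero) Jacobson radical, generated by the images of X_1,…,X_r. If M is a finite-dimensional Λ'-module with dim_K(M/J'M) > r · dim_K(J'M), then M has a direct summand isomorphic to the unique simple Λ'-module Λ'/J'. -/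
noncomputable section

theorem trunc_decomp (K : Type) [Field K] (r : ℕ) (a : TruncAlg K r 1) :
    ∃ k : K, a - algebraMap K _ k ∈
      Submodule.span (TruncAlg K r 1) (Set.range (gen K r 1)) := by
  have hs : Function.Surjective (RingQuot.mkAlgHom K (TruncRel K r 1)) :=
    RingQuot.mkAlgHom_surjective K _
  let π : FreeAlgebra K (Fin r) →ₐ[K] TruncAlg K r 1 := RingQuot.mkAlgHom K (TruncRel K r 1)
  obtain ⟨b, rfl⟩ : ∃ b, π b = a := hs a
  induction b using FreeAlgebra.induction with
  | grade0 k => exact ⟨k, by rw [AlgHom.commutes, sub_self]; exact zero_mem _⟩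
  | grade1 i =>
    refine ⟨0, ?_⟩
    rw [map_zero, sub_zero]
    exact Submodule.subset_span ⟨i, rfl⟩
  | mul a b ha hb =>
    obtain ⟨k, hk⟩ := ha
    obtain ⟨l, hl⟩ := hb
    refine ⟨k * l, ?_⟩
    have : π (a * b) - algebraMap K _ (k * l) =
        π a • (π b - algebraMap K _ l) +
          (algebraMap K (TruncAlg K r 1) l) • (π a - algebraMap K _ k) := by
      simp only [smul_eq_mul, mul_sub, sub_mul, map_mul, Algebra.commutes l]
      abel
    rw [this]
    exact add_mem (Submodule.smul_mem _ _ hl) (Submodule.smul_mem _ _ hk)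
  | add a b ha hb =>
    obtain ⟨k, hk⟩ := ha
    obtain ⟨l, hl⟩ := hb
    refine ⟨k + l, ?_⟩
    rw [map_add, map_add, add_sub_add_comm]
    exact add_mem hk hl

theorem gen_smul_mem (K : Type) [Field K] (r : ℕ)
    (M : Type) [AddCommGroup M] [Module K M] [Module (TruncAlg K r 1) M]
    [IsScalarTower K (TruncAlg K r 1) M] (i : Fin r) (m : M) :
    gen K r 1 i • m ∈ jpow K r 1 M 1 := by
  refine Submodule.subset_span ⟨gen K r 1 i, ?_, m, rfl⟩
  rw [pow_one]
  have h1 := Submodule.mul_mem_mul (Submodule.mul_mem_mul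
    (Submodule.mem_top (R := K) (x := (1 : TruncAlg K r 1)))
    (Submodule.subset_span (R := K) (Set.mem_range_self (f := gen K r 1) i)))
    (Submodule.mem_top (R := K) (x := (1 : TruncAlg K r 1)))
  rw [one_mul, mul_one] at h1
  exact h1

/-- Let `Λ'` be the local truncated path algebra with `r` loops and Loewy
length `2` (so square-zero radical `J'`).  If `M` is a finite-dimensional `Λ'`-module with
`dim_K(M/J'M) > r · dim_K(J'M)`, then `M` has a direct summand isomorphic to the unique
simple `Λ'`-module `Λ'/J'`. -/
theorem stmt16 (K : Type) [Field K] [IsAlgClosed K] (r : ℕ) (hr : 0 < r)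
    (M : Type) [AddCommGroup M] [Module K M] [Module (TruncAlg K r 1) M]
    [IsScalarTower K (TruncAlg K r 1) M] [FiniteDimensional K M]
    (h : r * Module.finrank K ↥((jpow K r 1 M 1).restrictScalars K) <
      Module.finrank K (M ⧸ (jpow K r 1 M 1).restrictScalars K)) :
    ∃ p q : Submodule (TruncAlg K r 1) M, IsCompl p q ∧
      Nonempty (↥p ≃ₗ[TruncAlg K r 1]
        (TruncAlg K r 1 ⧸ Submodule.span (TruncAlg K r 1) (Set.range (gen K r 1)))) := by
  classical
  set N := jpow K r 1 M 1 with hN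
  haveI : SMulCommClass (TruncAlg K r 1) K M := IsScalarTower.to_smulCommClass'
  let φ : M →ₗ[K] (Fin r → ↥(N.restrictScalars K)) :=
    { toFun := fun m i => ⟨gen K r 1 i • m, gen_smul_mem K r M i m⟩
      map_add' := fun a b => by
        funext i; apply Subtype.ext; exact smul_add _ _ _
      map_smul' := fun k a => by
        funext i; apply Subtype.ext; exact smul_comm _ _ _ }
  have h1 := LinearMap.finrank_range_add_finrank_ker φ
  have h2 := Submodule.finrank_quotient_add_finrank (N.restrictScalars K)
  have h3 : Module.finrank K (LinearMap.range φ) ≤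
      r * Module.finrank K ↥(N.restrictScalars K) := by
    refine (Submodule.finrank_le _).trans ?_
    rw [Module.finrank_pi_fintype]
    simp
  have h4 : ¬ LinearMap.ker φ ≤ N.restrictScalars K := by
    intro hle
    have := Submodule.finrank_mono hle
    omega
  obtain ⟨x, hxk, hxN⟩ := SetLike.not_le_iff_exists.mp h4
  obtain ⟨f, hf, hfN⟩ := Submodule.exists_le_ker_of_notMem hxN
  have hgx : ∀ i, gen K r 1 i • x = 0 := fun i =>
    congrArg Subtype.val (congrFun (LinearMap.mem_ker.mp hxk) i)
  have hIx : ∀ a ∈ Submodule.span (TruncAlg K r 1) (Set.range (gen K r 1)), a • x = 0 := by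
    intro a ha
    induction ha using Submodule.span_induction with
    | mem y hy => obtain ⟨i, rfl⟩ := hy; exact hgx i
    | zero => exact zero_smul _ _
    | add y z _ _ hy hz => rw [add_smul, hy, hz, add_zero]
    | smul c y _ hy => rw [smul_assoc, hy, smul_zero]
  have hIN : ∀ m : M, ∀ a ∈ Submodule.span (TruncAlg K r 1) (Set.range (gen K r 1)),
      a • m ∈ N := by
    intro m a ha
    induction ha using Submodule.span_induction with
    | mem y hy => obtain ⟨i, rfl⟩ := hy; exact gen_smul_mem K r M i m
    | zero => rw [zero_smul]; exact zero_mem _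
    | add y z _ _ hy hz => rw [add_smul]; exact add_mem hy hz
    | smul c y _ hy => rw [smul_assoc]; exact Submodule.smul_mem _ _ hy
  have hdec : ∀ (a : TruncAlg K r 1) (k : K) (m : M),
      a • m = k • m + (a - algebraMap K _ k) • m := by
    intro a k m
    rw [sub_smul, algebraMap_smul]; abel
  let q : Submodule (TruncAlg K r 1) M :=
    { carrier := {m | f m = 0}
      add_mem' := fun {a b} ha hb => by
        change f (a + b) = 0
        rw [map_add, show f a = 0 from ha, show f b = 0 from hb, add_zero]
      zero_mem' := map_zero f
      smul_mem' := fun a m hm => by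
        obtain ⟨k, hk⟩ := trunc_decomp K r a
        change f (a • m) = 0
        rw [hdec a k m, map_add, map_smul, show f m = 0 from hm, smul_zero, zero_add]
        exact hfN (hIN m _ hk) }
  have hker : LinearMap.ker (LinearMap.toSpanSingleton (TruncAlg K r 1) M x) =
      Submodule.span (TruncAlg K r 1) (Set.range (gen K r 1)) := by
    ext a
    rw [LinearMap.mem_ker, LinearMap.toSpanSingleton_apply]
    refine ⟨fun ha => ?_, hIx a⟩
    obtain ⟨k, hk⟩ := trunc_decomp K r a
    rw [hdec a k x, hIx _ hk, add_zero] at ha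
    have hk0 : k = 0 := by
      have := congrArg f ha
      rw [map_smul, map_zero, smul_eq_mul] at this
      exact (mul_eq_zero.mp this).resolve_right hf
    rw [hk0, map_zero, sub_zero] at hk
    exact hk
  refine ⟨LinearMap.range (LinearMap.toSpanSingleton (TruncAlg K r 1) M x), q, ⟨?_, ?_⟩, ⟨?_⟩⟩
  · rw [Submodule.disjoint_def]
    rintro _ ⟨a, rfl⟩ hy
    obtain ⟨k, hk⟩ := trunc_decomp K r a
    have hy' : f (a • x) = 0 := hy
    rw [LinearMap.toSpanSingleton_apply]
    rw [hdec a k x, hIx _ hk, add_zero] at hy' ⊢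
    rw [map_smul, smul_eq_mul] at hy'
    rw [(mul_eq_zero.mp hy').resolve_right hf, zero_smul]
  · rw [codisjoint_iff, eq_top_iff]
    intro m _
    refine Submodule.mem_sup.mpr ⟨(f m / f x) • x, ⟨algebraMap K _ (f m / f x), ?_⟩,
      m - (f m / f x) • x, ?_, by abel⟩
    · rw [LinearMap.toSpanSingleton_apply, algebraMap_smul]
    · change f _ = 0
      rw [map_sub, map_smul, smul_eq_mul, div_mul_cancel₀ _ hf, sub_self]
  · exact (LinearMap.quotKerEquivRange _).symm.trans (Submodule.quotEquivOfEq _ _ hker)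
end
end
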